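/- Let X be a finite type and let p, q be pmfs on X. Define the Bhattacharyya distance D_B(p,q) := −log Σ_x sqrt( p(x)·q(x) ). Then D(p‖q) ≥ 2·D_B(p,q) and D(q‖p) ≥ 2·D_B(p,q), with all quantities valued in [0,∞]. -/

import Mathlib

open scoped BigOperators ENNReal

/-- A probability mass function on a finite type. -/
def IsPMF {X : Type*} [Fintype X] (μ : X → ℝ) : Prop :=
  (∀ x, 0 ≤ μ x) ∧ ∑ x, μ x = 1

open Classical in
/-- Relative entropy (KL divergence) valued in `[0,∞]`. -/
noncomputable def KLdiv {X : Type*} [Fintype X] (μ ν : X → ℝ) : ℝ≥0∞ :=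
  if ∀ x, ν x = 0 → μ x = 0 then
    ENNReal.ofReal (∑ x, μ x * Real.log (μ x / ν x))
  else ⊤

/-!
For a pmf `p` put `r x = √(p x * q x)` and `S = ∑ x, r x`. Termwise
`p x * log (p x / r x) = p x * log (p x / q x) / 2`, so the log sum inequality for `p` against the
unnormalised weights `r` reads `-log S ≤ D(p‖q) / 2`, which is the claim. The roles of `p` and `q`
are exchanged by the symmetry of `S`.
-/

/-- The Bhattacharyya distance `D_B(a, b) = -log ∑ x, √(a x * b x)`, valued in `ℝ`. When `a` and `b`
have disjoint supports it takes the junk value `-log 0 = 0` in place of `∞`. -/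
noncomputable def bhattacharyyaDist {X : Type*} [Fintype X] (a b : X → ℝ) : ℝ :=
  -Real.log (∑ x, √(a x * b x))

theorem bhattacharyyaDist_comm {X : Type*} [Fintype X] (a b : X → ℝ) :
    bhattacharyyaDist a b = bhattacharyyaDist b a := by
  simp only [bhattacharyyaDist, mul_comm]

section LogSum

variable {ι : Type*} {s : Finset ι} {a b : ι → ℝ}

theorem sum_mul_log_sum_div_sum_le (ha : ∀ i ∈ s, 0 ≤ a i) (hb : ∀ i ∈ s, 0 ≤ b i)
    (hab : ∀ i ∈ s, b i = 0 → a i = 0) :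
    (∑ i ∈ s, a i) * Real.log ((∑ i ∈ s, a i) / ∑ i ∈ s, b i) ≤
      ∑ i ∈ s, a i * Real.log (a i / b i) := by
  have mul_ratio : ∀ i ∈ s, b i * (a i / b i) = a i := fun i hi =>
    mul_div_cancel_of_imp' (hab i hi)
  rcases (Finset.sum_nonneg hb).eq_or_lt with hB | hB
  · have a_eq_zero : ∀ i ∈ s, a i = 0 := fun i hi =>
      hab i hi ((Finset.sum_eq_zero_iff_of_nonneg hb).1 hB.symm i hi)
    rw [Finset.sum_eq_zero a_eq_zero, zero_mul]
    exact Finset.sum_nonneg fun i hi => by rw [a_eq_zero i hi, zero_mul]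
  · -- Jensen for `t ↦ t * log t` at the ratios `a i / b i` with weights `b i`.
    have jensen := Real.convexOn_mul_log.map_centerMass_le hb hB
      fun i hi => div_nonneg (ha i hi) (hb i hi)
    simp only [Finset.centerMass, Function.comp_apply, smul_eq_mul, ← mul_assoc] at jensen
    rw [Finset.sum_congr rfl mul_ratio,
      Finset.sum_congr rfl fun i hi => congrArg (· * _) (mul_ratio i hi), mul_assoc,
      mul_le_mul_iff_right₀ (inv_pos.2 hB), inv_mul_eq_div] at jensen
    exact jensen

theorem mul_log_div_sqrt_mul {x y : ℝ} (hx : 0 ≤ x) (hy : 0 ≤ y) :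
    x * Real.log (x / √(x * y)) = x * Real.log (x / y) / 2 := by
  have ratio : x / √(x * y) = √(x / y) := by
    rw [Real.sqrt_mul hx, ← div_div, Real.div_sqrt, Real.sqrt_div hx]
  rw [ratio, Real.log_sqrt (div_nonneg hx hy), mul_div_assoc]

theorem two_mul_sum_mul_log_sum_div_sum_sqrt_le (ha : ∀ i ∈ s, 0 ≤ a i) (hb : ∀ i ∈ s, 0 ≤ b i)
    (hab : ∀ i ∈ s, b i = 0 → a i = 0) :
    2 * ((∑ i ∈ s, a i) * Real.log ((∑ i ∈ s, a i) / ∑ i ∈ s, √(a i * b i))) ≤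
      ∑ i ∈ s, a i * Real.log (a i / b i) := by
  have sqrt_eq_zero : ∀ i ∈ s, √(a i * b i) = 0 → a i = 0 := fun i hi h =>
    (mul_eq_zero.1 ((Real.sqrt_eq_zero (mul_nonneg (ha i hi) (hb i hi))).1 h)).elim id (hab i hi)
  calc
    _ ≤ 2 * ∑ i ∈ s, a i * Real.log (a i / √(a i * b i)) := by
      gcongr
      exact sum_mul_log_sum_div_sum_le ha (fun _ _ => Real.sqrt_nonneg _) sqrt_eq_zero
    _ = 2 * ∑ i ∈ s, a i * Real.log (a i / b i) / 2 := by
      rw [Finset.sum_congr rfl fun i hi => mul_log_div_sqrt_mul (ha i hi) (hb i hi)]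
    _ = ∑ i ∈ s, a i * Real.log (a i / b i) := by
      rw [← Finset.sum_div, mul_div_cancel₀ _ two_ne_zero]

end LogSum

theorem ofReal_two_mul_bhattacharyyaDist_le_klDiv {X : Type*} [Fintype X] {p q : X → ℝ}
    (hp : IsPMF p) (hq : ∀ x, 0 ≤ q x) :
    ENNReal.ofReal (2 * bhattacharyyaDist p q) ≤ KLdiv p q := by
  unfold KLdiv
  split_ifs with hac
  · have h := two_mul_sum_mul_log_sum_div_sum_sqrt_le (s := Finset.univ)
      (fun x _ => hp.1 x) (fun x _ => hq x) (fun x _ => hac x)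
    rw [hp.2, one_mul, one_div, Real.log_inv] at h
    exact ENNReal.ofReal_le_ofReal h
  · exact le_top

/-- Both directed KL divergences dominate twice the Bhattacharyya distance
`D_B(p,q) = −log Σ_x √(p(x) q(x))`. -/
theorem kl_ge_two_bhattacharyya
    {X : Type*} [Fintype X]
    (p q : X → ℝ) (hp : IsPMF p) (hq : IsPMF q)
    (DB : ℝ) (hDB : DB = -Real.log (∑ x, Real.sqrt (p x * q x))) :
    ENNReal.ofReal (2 * DB) ≤ KLdiv p q ∧ ENNReal.ofReal (2 * DB) ≤ KLdiv q p := by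
  obtain rfl : DB = bhattacharyyaDist p q := hDB
  refine ⟨ofReal_two_mul_bhattacharyyaDist_le_klDiv hp hq.1, ?_⟩
  rw [bhattacharyyaDist_comm]
  exact ofReal_two_mul_bhattacharyyaDist_le_klDiv hq hp.1
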